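/- Let N ≥ 1 and Λ > 1. Let (u, v) be a classical solution of the system (P_Λ) with u ≥ 0 and v ≥ 0 on ℝ^N, satisfying condition (h∞). Then ∂_N u > 0 and ∂_N v < 0 at every point of ℝ^N. -/

import Mathlib

open scoped RealInnerProductSpace
open Filter

noncomputable section

/-- The Laplacian of `f : ℝ^N → ℝ`, as the sum of the pure second partial
derivatives in the coordinate directions. -/
def lap (N : ℕ) (f : EuclideanSpace ℝ (Fin N) → ℝ) (x : EuclideanSpace ℝ (Fin N)) : ℝ :=
  ∑ i : Fin N,
    fderiv ℝ (fun y => fderiv ℝ f y (EuclideanSpace.single i 1)) x (EuclideanSpace.single i 1)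

/-- `(u, v)` is a classical solution of the system `(P_Λ)` on `ℝ^N`:
`u, v` are `C²` and `-Δu = u - u³ - Λ u v²`, `-Δv = v - v³ - Λ u² v` pointwise. -/
def IsSolution (N : ℕ) (Λ : ℝ) (u v : EuclideanSpace ℝ (Fin N) → ℝ) : Prop :=
  ContDiff ℝ 2 u ∧ ContDiff ℝ 2 v ∧
  (∀ x, -lap N u x = u x - (u x) ^ 3 - Λ * u x * (v x) ^ 2) ∧
  (∀ x, -lap N v x = v x - (v x) ^ 3 - Λ * (u x) ^ 2 * v x)

/-- Condition `(h∞)`: `u → 1`, `v → 0` as `x_N → +∞` and `u → 0`, `v → 1` as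
`x_N → -∞`, uniformly with respect to `x' ∈ ℝ^{N-1}` (the dimension is `N + 1`). -/
def Hinf (N : ℕ) (u v : EuclideanSpace ℝ (Fin (N + 1)) → ℝ) : Prop :=
  (∀ ε : ℝ, 0 < ε → ∃ M : ℝ, ∀ x : EuclideanSpace ℝ (Fin (N + 1)),
    M ≤ x (Fin.last N) → |u x - 1| < ε ∧ |v x| < ε) ∧
  (∀ ε : ℝ, 0 < ε → ∃ M : ℝ, ∀ x : EuclideanSpace ℝ (Fin (N + 1)),
    x (Fin.last N) ≤ M → |u x| < ε ∧ |v x - 1| < ε)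

/-!
A Keller–Osserman estimate gives `0 ≤ u, v ≤ 1`, and then `u` and `v` are Lipschitz. In the
unknowns `u` and `-v` the system is cooperative, and both should increase with `x_N`.

The proof slides the solution along itself. The translations that increase both unknowns form a
closed set. Since `Λ > 1`, the states `(0, 1)` and `(1, 0)` are stable, so that a negative
increment cannot be minimal at a point where one end of the increment is far from the hyperplane
`x_N = 0`; hence only the points of a bounded slab matter. They do not matter for large
translations. On the slab, a quantitative strong maximum principle bounds the increments below by
a positive constant, uniformly in the unbounded variable `x'`, so that the set is also open in the
half-space of translations with positive last component. Sending the translation to `0` and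
propagating a positive derivative from one point yields the strict inequalities.
-/

open Metric Module Set
open scoped InnerProductSpace Laplacian Topology

section LaplacianCalculus

variable {E : Type*} [NormedAddCommGroup E] [InnerProductSpace ℝ E] [FiniteDimensional ℝ E]

lemma laplacian_eq_sum_fderiv_fderiv {ι : Type*} [Fintype ι] (b : OrthonormalBasis ι ℝ E)
    (f : E → ℝ) (x : E) :
    Δ f x = ∑ i, fderiv ℝ (fderiv ℝ f) x (b i) (b i) := by
  simp [InnerProductSpace.laplacian_eq_iteratedFDeriv_orthonormalBasis f b,
    iteratedFDeriv_two_apply]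

lemma lap_eq_laplacian {N : ℕ} {f : EuclideanSpace ℝ (Fin N) → ℝ} (hf : ContDiff ℝ 2 f)
    (x : EuclideanSpace ℝ (Fin N)) : lap N f x = Δ f x := by
  have hf' : DifferentiableAt ℝ (fderiv ℝ f) x :=
    (hf.fderiv_right (m := 1) le_rfl).differentiable one_ne_zero x
  simp [lap, laplacian_eq_sum_fderiv_fderiv (EuclideanSpace.basisFun (Fin N) ℝ),
    fderiv_clm_apply hf' (differentiableAt_const _)]

lemma laplacian_comp {f : E → ℝ} {x : E} {φ φ' : ℝ → ℝ} {φ'' : ℝ} (hf : ContDiffAt ℝ 2 f x)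
    (hφ : ∀ᶠ t in 𝓝 (f x), HasDerivAt φ (φ' t) t) (hφ' : HasDerivAt φ' φ'' (f x)) :
    Δ (fun y ↦ φ (f y)) x = φ'' * ‖fderiv ℝ f x‖ ^ 2 + φ' (f x) * Δ f x := by
  have hfderiv : fderiv ℝ (fun y ↦ φ (f y)) =ᶠ[𝓝 x] fun y ↦ φ' (f y) • fderiv ℝ f y := by
    filter_upwards [hf.continuousAt.eventually hφ, hf.eventually (by simp)] with y hφy hfy
    exact (hφy.comp_hasFDerivAt y (hfy.differentiableAt two_ne_zero).hasFDerivAt).fderiv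
  have hfx : HasFDerivAt f (fderiv ℝ f x) x := (hf.differentiableAt two_ne_zero).hasFDerivAt
  have hf'x : HasFDerivAt (fderiv ℝ f) (fderiv ℝ (fderiv ℝ f) x) x :=
    ((hf.fderiv_right (m := 1) le_rfl).differentiableAt one_ne_zero).hasFDerivAt
  have hsecond := hfderiv.fderiv_eq.trans ((hφ'.comp_hasFDerivAt x hfx).smul hf'x).fderiv
  let b := stdOrthonormalBasis ℝ E
  rw [laplacian_eq_sum_fderiv_fderiv b, laplacian_eq_sum_fderiv_fderiv b, b.norm_dual,
    Finset.mul_sum, Finset.mul_sum, ← Finset.sum_add_distrib, hsecond]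
  refine Finset.sum_congr rfl fun i _ ↦ ?_
  simp only [Function.comp_apply, add_apply, smul_apply, ContinuousLinearMap.smulRight_apply,
    smul_eq_mul]
  ring

lemma laplacian_const_mul {f : E → ℝ} {x : E} (k : ℝ) (hf : ContDiffAt ℝ 2 f x) :
    Δ (fun y ↦ k * f y) x = k * Δ f x :=
  InnerProductSpace.laplacian_smul k hf

lemma laplacian_comp_add_right (f : E → ℝ) (a x : E) : Δ (fun y ↦ f (y + a)) x = Δ f (x + a) := by
  simp [InnerProductSpace.laplacian_eq_iteratedFDeriv_stdOrthonormalBasis,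
    iteratedFDeriv_comp_add_right]

lemma laplacian_comp_linearIsometryEquiv {f : E → ℝ} (hf : ContDiff ℝ 2 f) (σ : E ≃ₗᵢ[ℝ] E)
    (x : E) : Δ (fun y ↦ f (σ y)) x = Δ f (σ x) := by
  have hcomp := σ.toContinuousLinearEquiv.toContinuousLinearMap.iteratedFDeriv_comp_right
    hf x (i := 2) le_rfl
  let b := stdOrthonormalBasis ℝ E
  rw [InnerProductSpace.laplacian_eq_iteratedFDeriv_orthonormalBasis _ b,
    InnerProductSpace.laplacian_eq_iteratedFDeriv_orthonormalBasis _ (b.map σ)]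
  refine Finset.sum_congr rfl fun i _ ↦ ?_
  trans iteratedFDeriv ℝ 2 f (σ x) (σ ∘ ![b i, b i])
  · exact congrArg (fun L ↦ L ![b i, b i]) hcomp
  · congr 1
    ext j
    fin_cases j <;> simp

lemma laplacian_fwdDiff {f : E → ℝ} (hf : ContDiff ℝ 2 f) (a x : E) :
    Δ (fwdDiff a f) x = Δ f (x + a) - Δ f x := by
  have hshift : ContDiff ℝ 2 fun y ↦ f (y + a) := hf.comp (contDiff_id.add contDiff_const)
  rw [← laplacian_comp_add_right]
  exact hshift.contDiffAt.laplacian_sub hf.contDiffAt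

omit [InnerProductSpace ℝ E] [FiniteDimensional ℝ E] in
lemma fwdDiff_neg (f : E → ℝ) (a x : E) : fwdDiff a (-f) x = fwdDiff (-a) f (x + a) := by
  simp [fwdDiff, neg_add_eq_sub]

lemma laplacian_fwdDiff_neg (f : E → ℝ) (a x : E) :
    Δ (fwdDiff a (-f)) x = Δ (fwdDiff (-a) f) (x + a) := by
  rw [funext (fwdDiff_neg f a), laplacian_comp_add_right]

lemma laplacian_continuousLinearMap (L : E →L[ℝ] ℝ) (x : E) : Δ (L : E → ℝ) x = 0 := by
  have hfderiv : fderiv ℝ (L : E → ℝ) = fun _ ↦ L := funext fun _ ↦ L.fderiv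
  simp [laplacian_eq_sum_fderiv_fderiv (stdOrthonormalBasis ℝ E), hfderiv]

omit [FiniteDimensional ℝ E] in
lemma contDiff_norm_sub_sq (y : E) : ContDiff ℝ 2 fun z : E ↦ ‖z - y‖ ^ 2 :=
  (contDiff_id.sub contDiff_const).norm_sq ℝ

omit [FiniteDimensional ℝ E] in
lemma hasFDerivAt_norm_sub_sq (x y : E) :
    HasFDerivAt (fun z ↦ ‖z - y‖ ^ 2) (2 • innerSL ℝ (x - y)) x :=
  ((hasFDerivAt_id x).sub_const y).norm_sq

omit [FiniteDimensional ℝ E] in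
lemma norm_fderiv_norm_sub_sq (x y : E) : ‖fderiv ℝ (fun z ↦ ‖z - y‖ ^ 2) x‖ = 2 * ‖x - y‖ := by
  rw [(hasFDerivAt_norm_sub_sq x y).fderiv, two_nsmul, ← two_smul ℝ, norm_smul,
    innerSL_apply_norm, Real.norm_two]

lemma laplacian_norm_sub_sq (x y : E) : Δ (fun z ↦ ‖z - y‖ ^ 2) x = 2 * finrank ℝ E := by
  have hfderiv : fderiv ℝ (fun z : E ↦ ‖z - y‖ ^ 2) = fun z ↦ 2 • innerSL ℝ (z - y) :=
    funext fun z ↦ (hasFDerivAt_norm_sub_sq z y).fderiv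
  have hsecond : HasFDerivAt (fun z : E ↦ 2 • innerSL ℝ (z - y)) (2 • innerSL ℝ) x :=
    ((innerSL ℝ).hasFDerivAt.comp x ((hasFDerivAt_id x).sub_const y)).const_smul 2
  let b := stdOrthonormalBasis ℝ E
  trans ∑ i, 2 • ⟪b i, b i⟫_ℝ
  · rw [laplacian_eq_sum_fderiv_fderiv b, hfderiv, hsecond.fderiv]
    rfl
  · simp [mul_comm]

end LaplacianCalculus

section MaximumPrinciple

lemma deriv_deriv_nonpos_of_isLocalMax {g : ℝ → ℝ} {t : ℝ} (hmax : IsLocalMax g t)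
    (hg : ContinuousAt g t) : deriv (deriv g) t ≤ 0 := by
  by_contra! hpos
  have hmin : IsLocalMin g t := isLocalMin_of_deriv_deriv_pos hpos hmax.deriv_eq_zero hg
  have hconst : g =ᶠ[𝓝 t] fun _ ↦ g t := by
    filter_upwards [hmax, hmin] with s hle hge using le_antisymm hle hge
  have hzero : deriv (deriv g) t = 0 := by simpa using hconst.deriv.deriv_eq
  exact hpos.ne' hzero

variable {E : Type*} [NormedAddCommGroup E] [InnerProductSpace ℝ E]

lemma fderiv_fderiv_apply_eq_deriv_deriv {f : E → ℝ} {x : E} (hf : ContDiffAt ℝ 2 f x) (e : E) :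
    fderiv ℝ (fderiv ℝ f) x e e = deriv (deriv fun t : ℝ ↦ f (x + t • e)) 0 := by
  have hline (t : ℝ) : HasDerivAt (fun t : ℝ ↦ x + t • e) e t := by
    simpa using ((hasDerivAt_id t).smul_const e).const_add x
  have hx : x + (0 : ℝ) • e = x := by simp
  have hfirst : deriv (fun t : ℝ ↦ f (x + t • e)) =ᶠ[𝓝 0] fun t ↦ fderiv ℝ f (x + t • e) e := by
    have hev : ∀ᶠ t : ℝ in 𝓝 0, ContDiffAt ℝ 2 f (x + t • e) :=
      (hline 0).continuousAt.eventually (by simpa [hx] using hf.eventually (by simp))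
    filter_upwards [hev] with t ht
    exact ((ht.differentiableAt two_ne_zero).hasFDerivAt.comp_hasDerivAt t (hline t)).deriv
  have hsecond : HasFDerivAt (fderiv ℝ f) (fderiv ℝ (fderiv ℝ f) x) (x + (0 : ℝ) • e) := by
    rw [hx]
    exact ((hf.fderiv_right (m := 1) le_rfl).differentiableAt one_ne_zero).hasFDerivAt
  have happly := (ContinuousLinearMap.apply ℝ ℝ e).hasFDerivAt.comp_hasDerivAt (0 : ℝ)
    (hsecond.comp_hasDerivAt 0 (hline 0))
  rw [hfirst.deriv_eq]
  exact happly.deriv.symm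

variable [FiniteDimensional ℝ E]

lemma laplacian_nonpos_of_isLocalMax {f : E → ℝ} {x : E} (hf : ContDiffAt ℝ 2 f x)
    (hmax : IsLocalMax f x) : Δ f x ≤ 0 := by
  rw [laplacian_eq_sum_fderiv_fderiv (stdOrthonormalBasis ℝ E)]
  refine Finset.sum_nonpos fun i _ ↦ ?_
  rw [fderiv_fderiv_apply_eq_deriv_deriv hf]
  have hline : ContinuousAt (fun t : ℝ ↦ x + t • stdOrthonormalBasis ℝ E i) 0 := by fun_prop
  refine deriv_deriv_nonpos_of_isLocalMax ?_ ?_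
  · exact IsLocalMax.comp_continuous (by simpa using hmax) hline
  · exact ContinuousAt.comp (by simpa using hf.continuousAt) hline

lemma laplacian_le_of_isLocalMax_sub {f g : E → ℝ} {x : E} (hf : ContDiffAt ℝ 2 f x)
    (hg : ContDiffAt ℝ 2 g x) (hmax : IsLocalMax (f - g) x) : Δ f x ≤ Δ g x := by
  rw [← sub_nonpos, ← hf.laplacian_sub hg]
  exact laplacian_nonpos_of_isLocalMax (hf.sub hg) hmax

lemma le_of_laplacian_lt {f g : E → ℝ} (hf : ContDiff ℝ 2 f) (hg : ContDiff ℝ 2 g) {K U : Set E}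
    (hK : IsCompact K) (hU : IsOpen U) (hUK : U ⊆ K) (hle : ∀ x ∈ K \ U, f x ≤ g x)
    (hlt : ∀ x ∈ U, g x < f x → Δ g x < Δ f x) : ∀ x ∈ K, f x ≤ g x := by
  by_contra! ⟨z, hzK, hz⟩
  obtain ⟨x, hxK, hx⟩ := hK.exists_isMaxOn ⟨z, hzK⟩ (hf.sub hg).continuous.continuousOn
  have hgf : g x < f x := by
    have : f z - g z ≤ f x - g x := hx hzK
    linarith
  have hxU : x ∈ U := by
    by_contra hxU
    exact (hle x ⟨hxK, hxU⟩).not_gt hgf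
  have hmax : IsLocalMax (f - g) x := hx.isLocalMax (mem_of_superset (hU.mem_nhds hxU) hUK)
  exact (laplacian_le_of_isLocalMax_sub hf.contDiffAt hg.contDiffAt hmax).not_gt (hlt x hxU hgf)

end MaximumPrinciple

section WeakMaximumPrinciple

variable {E : Type*} [NormedAddCommGroup E] [InnerProductSpace ℝ E] [FiniteDimensional ℝ E]

lemma exists_forall_add_mul_norm_sq_le {f : E → ℝ} (hf : Continuous f) {m : ℝ} (hm : ∀ x, m ≤ f x)
    {ε : ℝ} (hε : 0 < ε) (x₀ : E) :
    ∃ x, ∀ y, f x + ε * ‖x - x₀‖ ^ 2 ≤ f y + ε * ‖y - x₀‖ ^ 2 := by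
  refine Continuous.exists_forall_le (by fun_prop) ?_
  refine tendsto_atTop_add_left_of_le _ m hm (Tendsto.const_mul_atTop hε ?_)
  refine (tendsto_pow_atTop two_ne_zero).comp (tendsto_norm_cocompact_atTop.comp ?_)
  exact (Homeomorph.subRight x₀).isClosedEmbedding.tendsto_cocompact

lemma neg_le_laplacian_of_forall_add_mul_norm_sq_le {f : E → ℝ} (hf : ContDiff ℝ 2 f) {ε : ℝ}
    {x₀ x : E} (hmin : ∀ y, f x + ε * ‖x - x₀‖ ^ 2 ≤ f y + ε * ‖y - x₀‖ ^ 2) :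
    -(ε * (2 * finrank ℝ E)) ≤ Δ f x := by
  have hquad := (contDiff_norm_sub_sq x₀).contDiffAt (x := x)
  have hmax : IsLocalMax ((fun y ↦ -ε * ‖y - x₀‖ ^ 2) - f) x := Eventually.of_forall fun y ↦ by
    have := hmin y
    simp only [Pi.sub_apply]
    linarith
  have := laplacian_le_of_isLocalMax_sub (contDiffAt_const.mul hquad) hf.contDiffAt hmax
  rw [laplacian_const_mul _ hquad, laplacian_norm_sub_sq] at this
  simpa using this

lemma nonneg_of_laplacian_le_at_min {ι : Type*} [Finite ι] {U : ι → E → ℝ}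
    (hU : ∀ i, ContDiff ℝ 2 (U i)) {m : ℝ} (hm : ∀ i x, m ≤ U i x) {δ : ℝ} (hδ : 0 < δ)
    (hlap : ∀ i x, U i x < 0 → (∀ j, U i x ≤ U j x) → Δ (U i) x ≤ δ * U i x) (i₀ : ι) (x₀ : E) :
    0 ≤ U i₀ x₀ := by
  by_contra! hneg
  obtain ⟨ε, hε, hεδ⟩ : ∃ ε > 0, ε * (2 * finrank ℝ E) < -(δ * U i₀ x₀) := by
    have hpos : 0 < -(δ * U i₀ x₀) := by nlinarith
    have hn : (0 : ℝ) < 2 * finrank ℝ E + 1 := by positivity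
    refine ⟨-(δ * U i₀ x₀) / (2 * finrank ℝ E + 1), div_pos hpos hn, ?_⟩
    rw [div_mul_eq_mul_div, div_lt_iff₀ hn]
    linarith
  choose X hX using fun i ↦ exists_forall_add_mul_norm_sq_le (hU i).continuous (hm i) hε x₀
  have : Nonempty ι := ⟨i₀⟩
  obtain ⟨i, hi⟩ := Finite.exists_min fun i ↦ U i (X i) + ε * ‖X i - x₀‖ ^ 2
  have hsmallest (j : ι) : U i (X i) ≤ U j (X i) := by linarith [hi j, hX j (X i)]
  have hle : U i (X i) ≤ U i₀ x₀ := by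
    have : U i (X i) + ε * ‖X i - x₀‖ ^ 2 ≤ U i₀ x₀ := by
      simpa using (hi i₀).trans (hX i₀ x₀)
    have : 0 ≤ ε * ‖X i - x₀‖ ^ 2 := by positivity
    linarith
  have hlower := neg_le_laplacian_of_forall_add_mul_norm_sq_le (hU i) (hX i)
  have hupper := hlap i (X i) (hle.trans_lt hneg) hsmallest
  have : δ * U i (X i) ≤ δ * U i₀ x₀ := by gcongr
  linarith

end WeakMaximumPrinciple

section StrongMaximumPrinciple

variable {E : Type*} [NormedAddCommGroup E] [InnerProductSpace ℝ E] [FiniteDimensional ℝ E]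

/-- Nonnegative `C²` functions `W` with `Δ W ≤ C W`: the class for which a quantitative strong
maximum principle is used. -/
structure IsNonnegSupersolution (C : ℝ) (W : E → ℝ) : Prop where
  contDiff : ContDiff ℝ 2 W
  nonneg : ∀ x, 0 ≤ W x
  laplacian_le : ∀ x, Δ W x ≤ C * W x

lemma laplacian_gaussian (c α k : ℝ) (x y : E) :
    Δ (fun z ↦ c * (Real.exp (-(α * ‖z - y‖ ^ 2)) - k)) x =
      c * Real.exp (-(α * ‖x - y‖ ^ 2)) * (α * (4 * α * ‖x - y‖ ^ 2 - 2 * finrank ℝ E)) := by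
  have hexp (t : ℝ) : HasDerivAt (fun s ↦ Real.exp (-(α * s))) (Real.exp (-(α * t)) * -α) t := by
    simpa using ((hasDerivAt_id t).const_mul α).neg.exp
  rw [laplacian_comp (φ := fun t ↦ c * (Real.exp (-(α * t)) - k))
    (contDiff_norm_sub_sq y).contDiffAt
    (Eventually.of_forall fun t ↦ ((hexp t).sub_const k).const_mul c)
    (((hexp _).mul_const (-α)).const_mul c),
    norm_fderiv_norm_sub_sq, laplacian_norm_sub_sq]
  ring

namespace IsNonnegSupersolution

variable {C : ℝ} {W : E → ℝ}

lemma const_mul {k : ℝ} (hk : 0 ≤ k) (hW : IsNonnegSupersolution C W) :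
    IsNonnegSupersolution C fun x ↦ k * W x where
  contDiff := contDiff_const.mul hW.contDiff
  nonneg x := mul_nonneg hk (hW.nonneg x)
  laplacian_le x := by
    have := mul_le_mul_of_nonneg_left (hW.laplacian_le x) hk
    rw [laplacian_const_mul k hW.contDiff.contDiffAt]
    linarith

lemma gaussian_le (hW : IsNonnegSupersolution C W) (hC : 0 ≤ C) {α ρ S c : ℝ} (hα : 0 < α)
    (hρ : 0 ≤ ρ) (hαρ : C < α * (4 * α * ρ ^ 2 - 2 * finrank ℝ E)) (hc : 0 < c) {y : E}
    (hy : ∀ z ∈ ball y ρ, c ≤ W z) :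
    ∀ x ∈ closedBall y S, c * (Real.exp (-(α * ‖x - y‖ ^ 2)) - Real.exp (-(α * S ^ 2))) ≤ W x := by
  have hgauss : ContDiff ℝ 2 fun z : E ↦ Real.exp (-(α * ‖z - y‖ ^ 2)) :=
    (contDiff_const.mul (contDiff_norm_sub_sq y)).neg.exp
  refine le_of_laplacian_lt (contDiff_const.mul (hgauss.sub contDiff_const)) hW.contDiff
    (isCompact_closedBall y S) isOpen_ball ball_subset_closedBall ?_ ?_
  · intro x hx
    have : ‖x - y‖ = S := by simpa [dist_eq_norm] using hx
    simpa [this] using hW.nonneg x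
  · intro x _ hlt
    have hρx : ρ ≤ ‖x - y‖ := by
      by_contra! hxρ
      have hcx : c ≤ W x := hy x (by simpa [dist_eq_norm] using hxρ)
      have : Real.exp (-(α * ‖x - y‖ ^ 2)) ≤ 1 :=
        Real.exp_le_one_iff.2 (neg_nonpos.2 (by positivity))
      nlinarith [Real.exp_pos (-(α * S ^ 2))]
    rw [laplacian_gaussian]
    calc Δ W x ≤ C * W x := hW.laplacian_le x
      _ ≤ C * (c * Real.exp (-(α * ‖x - y‖ ^ 2))) := by
        gcongr
        nlinarith [Real.exp_pos (-(α * S ^ 2))]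
      _ = c * Real.exp (-(α * ‖x - y‖ ^ 2)) * C := by ring
      _ < c * Real.exp (-(α * ‖x - y‖ ^ 2)) * (α * (4 * α * ρ ^ 2 - 2 * finrank ℝ E)) := by gcongr
      _ ≤ _ := by gcongr

lemma exists_pos_forall_closedBall_le {ρ c R : ℝ} (hC : 0 ≤ C) (hρ : 0 < ρ) (hc : 0 < c)
    (hR : 0 ≤ R) :
    ∃ ω > 0, ∀ W : E → ℝ, IsNonnegSupersolution C W → ∀ y, (∀ z ∈ ball y ρ, c ≤ W z) →
      ∀ x ∈ closedBall y R, ω ≤ W x := by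
  obtain ⟨α, hα, hαρ⟩ : ∃ α > 0, C < α * (4 * α * ρ ^ 2 - 2 * finrank ℝ E) := by
    have hlim : Tendsto (fun α : ℝ ↦ α * (4 * α * ρ ^ 2 - 2 * finrank ℝ E)) atTop atTop := by
      refine tendsto_id.atTop_mul_atTop₀ (tendsto_atTop_add_const_right _ _ ?_)
      exact (tendsto_id.const_mul_atTop four_pos).atTop_mul_const (by positivity)
    exact ((eventually_gt_atTop 0).and (hlim.eventually_gt_atTop C)).exists
  refine ⟨c * (Real.exp (-(α * R ^ 2)) - Real.exp (-(α * (R + 1) ^ 2))), ?_, ?_⟩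
  · have : Real.exp (-(α * (R + 1) ^ 2)) < Real.exp (-(α * R ^ 2)) := by
      gcongr
      linarith
    exact mul_pos hc (sub_pos.2 this)
  · intro W hW y hy x hx
    have hxR : ‖x - y‖ ≤ R := by simpa [dist_eq_norm] using hx
    refine le_trans ?_ (hW.gaussian_le hC hα hρ.le hαρ hc hy x
      (closedBall_subset_closedBall (by linarith : R ≤ R + 1) hx))
    gcongr

end IsNonnegSupersolution

end StrongMaximumPrinciple

section KellerOsserman

variable {E : Type*} [NormedAddCommGroup E] [InnerProductSpace ℝ E] [FiniteDimensional ℝ E]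

lemma laplacian_const_div_sub_norm_sub_sq (m : ℝ) {r : ℝ} {x y : E} (hy : ‖y - x‖ ^ 2 < r) :
    Δ (fun z ↦ m / (r - ‖z - x‖ ^ 2)) y =
      (8 * m * ‖y - x‖ ^ 2 + 2 * finrank ℝ E * m * (r - ‖y - x‖ ^ 2)) / (r - ‖y - x‖ ^ 2) ^ 3 := by
  have hinv {t : ℝ} (ht : t < r) : HasDerivAt (fun s ↦ m / (r - s)) (m / (r - t) ^ 2) t := by
    have := ((hasDerivAt_id t).const_sub r).inv (sub_pos.2 ht).ne'
    simpa [div_eq_mul_inv] using this.const_mul m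
  have hinv' {t : ℝ} (ht : t < r) :
      HasDerivAt (fun s ↦ m / (r - s) ^ 2) (2 * m / (r - t) ^ 3) t := by
    have hd : r - t ≠ 0 := (sub_pos.2 ht).ne'
    have := (((hasDerivAt_id t).const_sub r).pow 2).inv (pow_ne_zero 2 hd)
    refine (this.const_mul m).congr_deriv ?_
    simp only [Nat.cast_ofNat, id_eq, Nat.add_one_sub_one, pow_one, mul_neg, mul_one, neg_neg,
      Pi.pow_apply]
    field_simp
  have hd : r - ‖y - x‖ ^ 2 ≠ 0 := (sub_pos.2 hy).ne'
  rw [laplacian_comp (φ := fun t ↦ m / (r - t)) (contDiff_norm_sub_sq x).contDiffAt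
    ((eventually_lt_nhds hy).mono fun t ht ↦ hinv ht) (hinv' hy), norm_fderiv_norm_sub_sq,
    laplacian_norm_sub_sq]
  field_simp
  ring

lemma sq_le_of_isLocalMax_mul {f : E → ℝ} (hf : ContDiff ℝ 2 f) {r : ℝ} {x y : E}
    (hy : ‖y - x‖ ^ 2 < r) (hfy : 0 < f y) (hcube : f y ^ 3 ≤ Δ f y)
    (hmax : IsLocalMax (fun z ↦ (r - ‖z - x‖ ^ 2) * f z) y) :
    ((r - ‖y - x‖ ^ 2) * f y) ^ 2 ≤ (2 * finrank ℝ E + 8) * r := by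
  set d := r - ‖y - x‖ ^ 2 with hd
  set m := d * f y with hm
  have hdpos : 0 < d := sub_pos.2 hy
  have hmpos : 0 < m := mul_pos hdpos hfy
  have hquad := contDiff_norm_sub_sq x
  have htouch : IsLocalMax (f - fun z ↦ m / (r - ‖z - x‖ ^ 2)) y := by
    filter_upwards [hmax, hquad.continuous.continuousAt.eventually_lt_const hy] with z hz hzr
    have hle : f z ≤ m / (r - ‖z - x‖ ^ 2) := by
      rw [le_div_iff₀ (sub_pos.2 hzr), mul_comm]
      exact hz
    have heq : m / (r - ‖y - x‖ ^ 2) = f y := by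
      rw [hm, ← hd]
      field_simp
    simp only [Pi.sub_apply, heq]
    linarith
  have hbarrier : ContDiffAt ℝ 2 (fun z ↦ m / (r - ‖z - x‖ ^ 2)) y :=
    contDiffAt_const.div (contDiffAt_const.sub hquad.contDiffAt) hdpos.ne'
  have hlap := laplacian_le_of_isLocalMax_sub hf.contDiffAt hbarrier htouch
  rw [laplacian_const_div_sub_norm_sub_sq m hy, ← hd] at hlap
  have hcubic : m ^ 3 ≤ m * (8 * ‖y - x‖ ^ 2 + 2 * finrank ℝ E * d) := by
    rw [le_div_iff₀ (by positivity)] at hlap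
    have : f y ^ 3 * d ^ 3 ≤ Δ f y * d ^ 3 := by gcongr
    linear_combination this + hlap
  have hsq : m ^ 2 ≤ 8 * ‖y - x‖ ^ 2 + 2 * finrank ℝ E * d :=
    le_of_mul_le_mul_left (by linarith) hmpos
  have : (0 : ℝ) ≤ finrank ℝ E * ‖y - x‖ ^ 2 := by positivity
  nlinarith

lemma nonpos_of_cube_le_laplacian {f : E → ℝ} (hf : ContDiff ℝ 2 f)
    (hcube : ∀ x, 0 < f x → f x ^ 3 ≤ Δ f x) (x : E) : f x ≤ 0 := by
  by_contra! hx
  have hbound (R : ℝ) (hR : 0 < R) : f x ^ 2 * R ^ 2 ≤ 2 * finrank ℝ E + 8 := by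
    have hcont : Continuous fun z ↦ (R ^ 2 - ‖z - x‖ ^ 2) * f z :=
      (continuous_const.sub (contDiff_norm_sub_sq x).continuous).mul hf.continuous
    obtain ⟨y, hyR, hy⟩ := (isCompact_closedBall x R).exists_isMaxOn
      ⟨x, mem_closedBall_self hR.le⟩ hcont.continuousOn
    have hcenter : R ^ 2 * f x ≤ (R ^ 2 - ‖y - x‖ ^ 2) * f y := by
      simpa using hy (mem_closedBall_self hR.le)
    have hnorm : ‖y - x‖ ≤ R := by simpa [dist_eq_norm] using hyR
    have hpos : 0 < (R ^ 2 - ‖y - x‖ ^ 2) * f y := hcenter.trans_lt' (by positivity)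
    have hd : 0 ≤ R ^ 2 - ‖y - x‖ ^ 2 := by nlinarith [norm_nonneg (y - x)]
    have hfy : 0 < f y := pos_of_mul_pos_right hpos hd
    have hyint : ‖y - x‖ ^ 2 < R ^ 2 := sub_pos.1 (pos_of_mul_pos_left hpos hfy.le)
    have hball : closedBall x R ∈ 𝓝 y := by
      refine mem_of_superset (isOpen_ball.mem_nhds ?_) ball_subset_closedBall
      simpa [dist_eq_norm] using lt_of_pow_lt_pow_left₀ 2 hR.le hyint
    have hsq := sq_le_of_isLocalMax_mul hf hyint hfy (hcube y hfy) (hy.isLocalMax hball)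
    have : (R ^ 2 * f x) ^ 2 ≤ ((R ^ 2 - ‖y - x‖ ^ 2) * f y) ^ 2 := by gcongr
    have hR2 : 0 < R ^ 2 := by positivity
    refine le_of_mul_le_mul_right ?_ hR2
    linear_combination this + hsq
  obtain ⟨R, hRbound, hR⟩ : ∃ R : ℝ, 2 * finrank ℝ E + 8 < f x ^ 2 * R ^ 2 ∧ 0 < R :=
    ((((tendsto_pow_atTop two_ne_zero).const_mul_atTop (by positivity)).eventually_gt_atTop _).and
      (eventually_gt_atTop 0)).exists
  exact (hbound R hR).not_gt hRbound

end KellerOsserman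

section GradientEstimate

variable {E : Type*} [NormedAddCommGroup E] [InnerProductSpace ℝ E] [FiniteDimensional ℝ E]

lemma laplacian_half_ball_barrier (B K : ℝ) {e : E} (he : ‖e‖ = 1) (x : E) :
    Δ (fun z ↦ B * ‖z‖ ^ 2 + K * (⟪e, z⟫ - ⟪e, z⟫ ^ 2)) x = 2 * finrank ℝ E * B - 2 * K := by
  have hquad : ContDiffAt ℝ 2 (fun z : E ↦ ‖z‖ ^ 2) x := (contDiff_norm_sq ℝ).contDiffAt
  have hinner : ContDiffAt ℝ 2 (innerSL ℝ e) x := (innerSL ℝ e).contDiff.contDiffAt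
  have hφ (t : ℝ) : HasDerivAt (fun s ↦ K * (s - s ^ 2)) (K * (1 - 2 * t)) t := by
    simpa using ((hasDerivAt_id t).sub (hasDerivAt_pow 2 t)).const_mul K
  have hφ' (t : ℝ) : HasDerivAt (fun s ↦ K * (1 - 2 * s)) (K * -2) t := by
    simpa using (((hasDerivAt_id t).const_mul 2).const_sub 1).const_mul K
  have hradial : Δ (fun z : E ↦ B * ‖z‖ ^ 2) x = 2 * finrank ℝ E * B := by
    rw [laplacian_const_mul B hquad]
    simpa [mul_comm] using congrArg (B * ·) (laplacian_norm_sub_sq x 0)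
  have hlinear : Δ (fun z ↦ K * (⟪e, z⟫ - ⟪e, z⟫ ^ 2)) x = -(2 * K) := by
    have := laplacian_comp hinner (Eventually.of_forall hφ) (hφ' _)
    rw [laplacian_continuousLinearMap, (innerSL ℝ e).fderiv, innerSL_apply_norm, he] at this
    exact this.trans (by ring)
  have hadd := (contDiffAt_const.mul hquad).laplacian_add
    (contDiffAt_const.mul (hinner.sub (hinner.pow 2)) : ContDiffAt ℝ 2
      (fun z ↦ K * (⟪e, z⟫ - ⟪e, z⟫ ^ 2)) x) (f₁ := fun z ↦ B * ‖z‖ ^ 2)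
  exact hadd.trans (by rw [hradial, hlinear, sub_eq_add_neg])

lemma le_half_ball_barrier {φ : E → ℝ} (hφ : ContDiff ℝ 2 φ) {B F K : ℝ} (hB : 0 ≤ B)
    (hφB : ∀ z, φ z ≤ B) (hφF : ∀ z, -F ≤ Δ φ z) (hK : 2 * finrank ℝ E * B + F < 2 * K)
    (hK₀ : 0 ≤ K) {e : E} (he : ‖e‖ = 1) (hzero : ∀ z, ⟪e, z⟫ = 0 → φ z ≤ 0) {z : E}
    (hz : ‖z‖ ≤ 1) (hez : 0 ≤ ⟪e, z⟫) :
    φ z ≤ B * ‖z‖ ^ 2 + K * (⟪e, z⟫ - ⟪e, z⟫ ^ 2) := by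
  have hinner : Continuous fun z ↦ ⟪e, z⟫ := by fun_prop
  have hbarrier : ContDiff ℝ 2 fun z ↦ B * ‖z‖ ^ 2 + K * (⟪e, z⟫ - ⟪e, z⟫ ^ 2) := by
    have hlin : ContDiff ℝ 2 fun z ↦ ⟪e, z⟫ := (innerSL ℝ e).contDiff
    exact (contDiff_const.mul (contDiff_norm_sq ℝ)).add
      (contDiff_const.mul (hlin.sub (hlin.pow 2)))
  refine le_of_laplacian_lt hφ hbarrier
    (K := closedBall 0 1 ∩ {z | 0 ≤ ⟪e, z⟫}) (U := ball 0 1 ∩ {z | 0 < ⟪e, z⟫})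
    ((isCompact_closedBall 0 1).inter_right (isClosed_le continuous_const hinner))
    (isOpen_ball.inter (isOpen_lt continuous_const hinner))
    (inter_subset_inter ball_subset_closedBall fun y (hy : 0 < ⟪e, y⟫) ↦ hy.le) ?_ ?_ z
    ⟨by simpa using hz, hez⟩
  · rintro y ⟨⟨hyball, hey : 0 ≤ ⟪e, y⟫⟩, hyU⟩
    have hynorm : ‖y‖ ≤ 1 := by simpa using hyball
    have hey1 : ⟪e, y⟫ ≤ 1 := (real_inner_le_norm e y).trans (by simpa [he] using hynorm)
    have hlin : 0 ≤ K * (⟪e, y⟫ - ⟪e, y⟫ ^ 2) := mul_nonneg hK₀ (by nlinarith)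
    rcases hey.eq_or_lt with hflat | hpos
    · have : 0 ≤ B * ‖y‖ ^ 2 := by positivity
      linarith [hzero y hflat.symm]
    · have hsphere : ‖y‖ = 1 := hynorm.antisymm (not_lt.1 fun h ↦ hyU ⟨by simpa using h, hpos⟩)
      rw [hsphere]
      linarith [hφB y]
  · intro y _ _
    rw [laplacian_half_ball_barrier B K he]
    linarith [hφF y]

-- Comparison of `w` with its reflection in the hyperplane bisecting the two points.
lemma sub_le_mul_of_laplacian_bounded {w : E → ℝ} (hw : ContDiff ℝ 2 w) {B F : ℝ}
    (hB : ∀ x, |w x| ≤ B) (hF : ∀ x, |Δ w x| ≤ F) (x : E) {e : E} (he : ‖e‖ = 1) {t : ℝ}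
    (ht : 0 ≤ t) (ht1 : t ≤ 1) :
    w (x + t • e) - w (x - t • e) ≤ (2 * B + (2 * finrank ℝ E * B + F + 1)) * t := by
  let σ := (ℝ ∙ e)ᗮ.reflection
  have hB₀ : 0 ≤ B := (abs_nonneg _).trans (hB x)
  have hF₀ : 0 ≤ F := (abs_nonneg _).trans (hF x)
  have hshift : ContDiff ℝ 2 fun z ↦ w (z + x) := hw.comp (contDiff_id.add contDiff_const)
  have hreflect : ContDiff ℝ 2 fun z ↦ w (σ z + x) :=
    hshift.comp σ.toContinuousLinearEquiv.contDiff
  have hlap (z : E) : Δ (fun z ↦ w (z + x) - w (σ z + x)) z = Δ w (z + x) - Δ w (σ z + x) := by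
    rw [← laplacian_comp_add_right w, ← laplacian_comp_add_right w,
      ← laplacian_comp_linearIsometryEquiv hshift]
    exact hshift.contDiffAt.laplacian_sub hreflect.contDiffAt
  have hbarrier := le_half_ball_barrier (hshift.sub hreflect) (B := 2 * B) (F := 2 * F)
    (K := 2 * finrank ℝ E * B + F + 1) (e := e) (z := t • e) (by positivity)
    (fun z ↦ by linarith [abs_le.1 (hB (z + x)), abs_le.1 (hB (σ z + x))])
    (fun z ↦ by linarith [hlap z, abs_le.1 (hF (z + x)), abs_le.1 (hF (σ z + x))])
    (by linarith) (by positivity) he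
    (fun z hz ↦ by
      have : σ z = z := Submodule.reflection_mem_subspace_eq_self
        (Submodule.mem_orthogonal_singleton_iff_inner_right.2 hz)
      simp [this])
    (by simpa [norm_smul, he, abs_of_nonneg ht] using ht1)
    (by simpa [inner_smul_right, he] using ht)
  have hσ : σ (t • e) = -(t • e) := by
    rw [map_smul, Submodule.reflection_orthogonalComplement_singleton_eq_neg, smul_neg]
  have hnorm : ‖t • e‖ = t := by simp [norm_smul, he, abs_of_nonneg ht]
  have hinner : ⟪e, t • e⟫ = t := by simp [inner_smul_right, he]
  rw [hσ, hnorm, hinner, add_comm (t • e), neg_add_eq_sub] at hbarrier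
  have htt : 0 ≤ t - t ^ 2 := by nlinarith
  have : 0 ≤ 2 * finrank ℝ E * B + F + 1 := by positivity
  nlinarith

lemma exists_lipschitzWith_of_laplacian_bounded {w : E → ℝ} (hw : ContDiff ℝ 2 w) {B F : ℝ}
    (hB : ∀ x, |w x| ≤ B) (hF : ∀ x, |Δ w x| ≤ F) : ∃ L, LipschitzWith L w := by
  have hB₀ : 0 ≤ B := (abs_nonneg _).trans (hB 0)
  have hF₀ : 0 ≤ F := (abs_nonneg _).trans (hF 0)
  let L : ℝ := 2 * B + (2 * finrank ℝ E * B + F + 1)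
  have hL : 2 * B ≤ L := by
    have : 0 ≤ 2 * finrank ℝ E * B + F + 1 := by positivity
    linarith
  refine ⟨L.toNNReal, LipschitzWith.of_le_add_mul' L fun p q ↦ ?_⟩
  rcases eq_or_ne p q with rfl | hpq
  · simp
  rcases le_total ‖p - q‖ 2 with hnear | hfar
  · have hunit : ‖(‖p - q‖⁻¹) • (p - q)‖ = 1 := norm_smul_inv_norm (𝕜 := ℝ) (sub_ne_zero.2 hpq)
    have := sub_le_mul_of_laplacian_bounded hw hB hF (midpoint ℝ p q) hunit
      (t := ‖p - q‖ / 2) (by positivity) (by linarith)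
    have hstep : (‖p - q‖ / 2) • (‖p - q‖⁻¹ • (p - q)) = (2⁻¹ : ℝ) • (p - q) := by
      rw [smul_smul, div_mul_eq_mul_div, mul_inv_cancel₀ (norm_ne_zero_iff.2 (sub_ne_zero.2 hpq)),
        one_div]
    have hp : midpoint ℝ p q + (2⁻¹ : ℝ) • (p - q) = p := by
      rw [midpoint_eq_smul_add, invOf_eq_inv]
      module
    have hq : midpoint ℝ p q - (2⁻¹ : ℝ) • (p - q) = q := by
      rw [midpoint_eq_smul_add, invOf_eq_inv]
      module
    rw [hstep, hp, hq] at this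
    rw [dist_eq_norm]
    nlinarith [norm_nonneg (p - q)]
  · rw [dist_eq_norm]
    nlinarith [abs_le.1 (hB p), abs_le.1 (hB q)]

end GradientEstimate

section Increments

lemma exists_div_le_fwdDiff {G : Type*} [AddCommMonoid G] (w : G → ℝ) (a x : G) {n : ℕ}
    (hn : n ≠ 0) : ∃ k < n, (w (x + n • a) - w x) / n ≤ fwdDiff a w (x + k • a) := by
  have hsum : ∑ k ∈ Finset.range n, fwdDiff a w (x + k • a) = w (x + n • a) - w x := by
    simpa [fwdDiff, add_assoc, succ_nsmul] using Finset.sum_range_sub (fun k ↦ w (x + k • a)) n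
  have havg : ∑ _k ∈ Finset.range n, (w (x + n • a) - w x) / n ≤
      ∑ k ∈ Finset.range n, fwdDiff a w (x + k • a) := by
    rw [hsum, Finset.sum_const, Finset.card_range, nsmul_eq_mul,
      mul_div_cancel₀ _ (Nat.cast_ne_zero.2 hn)]
  simpa using Finset.exists_le_of_sum_le (Finset.nonempty_range_iff.2 hn) havg

variable {E : Type*} [NormedAddCommGroup E]

lemma uniformContinuous_fwdDiff {w : E → ℝ} (hw : UniformContinuous w) (a : E) :
    UniformContinuous (fwdDiff a w) :=
  (hw.comp (uniformContinuous_id.add_const a)).sub hw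

lemma tendsto_inv_mul_fwdDiff [NormedSpace ℝ E] {w : E → ℝ} {x : E} (hw : DifferentiableAt ℝ w x)
    (e : E) : Tendsto (fun τ : ℝ ↦ τ⁻¹ * fwdDiff (τ • e) w x) (𝓝[>] 0) (𝓝 (fderiv ℝ w x e)) :=
  (hw.hasFDerivAt.hasLineDerivAt e).tendsto_slope_zero_right

lemma mul_le_fwdDiff_of_le_fderiv [NormedSpace ℝ E] {w : E → ℝ} (hw : Differentiable ℝ w)
    {s : Set E} (hs : Convex ℝ s) {c : ℝ} {e : E} (hc : ∀ z ∈ s, c ≤ fderiv ℝ w z e) {x : E}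
    {τ : ℝ} (hτ : 0 ≤ τ) (hx : x ∈ s) (hxτ : x + τ • e ∈ s) : τ * c ≤ fwdDiff (τ • e) w x := by
  obtain ⟨z, hz, hmvt⟩ :=
    domain_mvt (fun z _ ↦ (hw z).hasFDerivAt.hasFDerivWithinAt) hs hx hxτ
  rw [add_sub_cancel_left, map_smul, smul_eq_mul] at hmvt
  rw [fwdDiff, hmvt]
  exact mul_le_mul_of_nonneg_left (hc z (hs.segment_subset hx hxτ hz)) hτ

lemma exists_dist_le_div_le_fwdDiff [NormedSpace ℝ E] (w : E → ℝ) (a x : E) {n : ℕ} (hn : n ≠ 0) :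
    ∃ y, dist x y ≤ n * ‖a‖ ∧ (w (x + n • a) - w (x - n • a)) / (2 * n) ≤ fwdDiff a w y := by
  obtain ⟨k, hk, hle⟩ := exists_div_le_fwdDiff w a (x - n • a) (n := 2 * n) (by simpa using hn)
  refine ⟨x - n • a + k • a, ?_, ?_⟩
  · have hnk : |(n : ℝ) - k| ≤ n := by
      have : (k : ℝ) ≤ 2 * n := by exact_mod_cast hk.le
      rw [abs_le]
      constructor <;> linarith [(Nat.cast_nonneg k : (0 : ℝ) ≤ k)]
    have hdiff : x - (x - n • a + k • a) = ((n : ℝ) - k) • a := by module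
    rw [dist_eq_norm, hdiff, norm_smul, Real.norm_eq_abs]
    gcongr
  · have hend : x - n • a + (2 * n) • a = x + n • a := by module
    simpa [hend] using hle

variable [InnerProductSpace ℝ E] [FiniteDimensional ℝ E]

lemma exists_pos_le_fwdDiff_of_slab {w : E → ℝ} (hw : UniformContinuous w) {ℓ : E →L[ℝ] ℝ}
    {a : E} (ha : 0 < ℓ a) {M η : ℝ} (hη : 0 < η) (hgap : ∀ x y, ℓ x ≤ -M → M ≤ ℓ y → w x + η ≤ w y)
    {C : ℝ} (hC : 0 ≤ C) (hsuper : IsNonnegSupersolution C (fwdDiff a w)) :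
    ∃ c > 0, ∀ x, |ℓ x| ≤ M → c ≤ fwdDiff a w x := by
  obtain ⟨n, hn₀, hn⟩ : ∃ n : ℕ, n ≠ 0 ∧ 2 * M ≤ n * ℓ a := by
    obtain ⟨n, hn⟩ := exists_nat_ge (2 * M / ℓ a)
    refine ⟨n + 1, n.succ_ne_zero, ?_⟩
    rw [div_le_iff₀ ha] at hn
    push_cast
    linarith
  let c := η / (2 * n)
  have hc : 0 < c := by positivity
  obtain ⟨ρ, hρ, hclose⟩ :=
    Metric.uniformContinuous_iff.1 (uniformContinuous_fwdDiff hw a) (c / 2) (half_pos hc)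
  obtain ⟨ω, hω, hspread⟩ := IsNonnegSupersolution.exists_pos_forall_closedBall_le (E := E) hC hρ
    (half_pos hc) (by positivity : 0 ≤ n * ‖a‖)
  refine ⟨ω, hω, fun x hx ↦ ?_⟩
  obtain ⟨hxl, hxu⟩ := abs_le.1 hx
  have hjump : η ≤ w (x + n • a) - w (x - n • a) := by
    have := hgap (x - n • a) (x + n • a) (by simp only [map_sub, map_nsmul, nsmul_eq_mul]; linarith)
      (by simp only [map_add, map_nsmul, nsmul_eq_mul]; linarith)
    linarith
  obtain ⟨y, hxy, hy⟩ := exists_dist_le_div_le_fwdDiff w a x hn₀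
  have hyc : c ≤ fwdDiff a w y := (div_le_div_of_nonneg_right hjump (by positivity)).trans hy
  refine hspread _ hsuper y (fun z hz ↦ ?_) x hxy
  have := abs_lt.1 (hclose (mem_ball.1 hz))
  linarith

lemma fderiv_pos_of_exists_fderiv_pos {w : E → ℝ} (hw : ContDiff ℝ 2 w) {C : ℝ} (hC : 0 ≤ C)
    {e : E} (hsuper : ∀ τ : ℝ, 0 < τ → IsNonnegSupersolution C (fwdDiff (τ • e) w)) {y : E}
    (hy : 0 < fderiv ℝ w y e) (x : E) : 0 < fderiv ℝ w x e := by
  have hdiff : Differentiable ℝ w := hw.differentiable two_ne_zero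
  have hcont : Continuous fun z ↦ fderiv ℝ w z e :=
    (hw.continuous_fderiv two_ne_zero).clm_apply continuous_const
  set d := fderiv ℝ w y e
  obtain ⟨ρ, hρ, hball⟩ : ∃ ρ > 0, ∀ z ∈ ball y ρ, d / 2 ≤ fderiv ℝ w z e := by
    obtain ⟨ρ, hρ, h⟩ := Metric.eventually_nhds_iff_ball.1
      (hcont.continuousAt.eventually_const_lt (half_lt_self hy))
    exact ⟨ρ, hρ, fun z hz ↦ (h z hz).le⟩
  obtain ⟨ω, hω, hspread⟩ := IsNonnegSupersolution.exists_pos_forall_closedBall_le (E := E) hC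
    (half_pos hρ) (half_pos hy) (dist_nonneg (x := x) (y := y))
  refine hω.trans_le (ge_of_tendsto (tendsto_inv_mul_fwdDiff (hdiff x) e) ?_)
  have hsmall : ∀ᶠ τ : ℝ in 𝓝[>] 0, ‖τ • e‖ < ρ / 2 := by
    have : Continuous fun τ : ℝ ↦ ‖τ • e‖ := by fun_prop
    exact (this.tendsto' 0 0 (by simp)).eventually_lt_const (half_pos hρ) |>.filter_mono
      nhdsWithin_le_nhds
  filter_upwards [hsmall, self_mem_nhdsWithin] with τ hτe (hτ : 0 < τ)
  refine hspread _ ((hsuper τ hτ).const_mul (inv_nonneg.2 hτ.le)) y (fun z hz ↦ ?_) x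
    (mem_closedBall.2 le_rfl)
  have hz' : z ∈ ball y ρ := ball_subset_ball (by linarith) hz
  have hzτ : z + τ • e ∈ ball y ρ := by
    have := dist_triangle (z + τ • e) z y
    rw [dist_self_add_left] at this
    exact mem_ball.2 (by linarith [mem_ball.1 hz])
  rw [le_inv_mul_iff₀ hτ]
  exact mul_le_fwdDiff_of_le_fderiv hdiff (convex_ball y ρ) hball hτ.le hz' hzτ

end Increments

section SlidingMethod

variable {E : Type*} [NormedAddCommGroup E] {ι : Type*}

/-- The translation by `a` decreases no component of the family `u`. In the sliding method the set
of such `a` is shown to contain the half-space of translations towards the front's larger values. -/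
def IsNondecreasingStep (u : ι → E → ℝ) (a : E) : Prop :=
  ∀ i x, u i x ≤ u i (x + a)

lemma isClosed_setOf_isNondecreasingStep {u : ι → E → ℝ} (hu : ∀ i, Continuous (u i)) :
    IsClosed {a | IsNondecreasingStep u a} := by
  simp only [IsNondecreasingStep, ofPred_forall]
  exact isClosed_iInter fun i ↦ isClosed_iInter fun x ↦
    isClosed_le continuous_const ((hu i).comp (continuous_const.add continuous_id))

variable [InnerProductSpace ℝ E] [FiniteDimensional ℝ E]

/-- A family `u` of bounded functions that increases from the half-space `ℓ ≤ -M` to the half-space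
`M ≤ ℓ`, and whose increments satisfy the inequalities of a cooperative elliptic system: a coercive
one, at a negative smallest component, for increments with an end point outside of the slab
`|ℓ| < M`, and a linear one for all increments along nondecreasing steps. -/
structure IsCooperativeFront (u : ι → E → ℝ) (ℓ : E →L[ℝ] ℝ) (M : ℝ) : Prop where
  contDiff : ∀ i, ContDiff ℝ 2 (u i)
  uniformContinuous : ∀ i, UniformContinuous (u i)
  exists_abs_le : ∃ B, ∀ i x, |u i x| ≤ B
  exists_gap : ∃ η > 0, ∀ i x y, ℓ x ≤ -M → M ≤ ℓ y → u i x + η ≤ u i y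
  exists_coercive : ∃ δ > 0, ∀ i a x, (ℓ x ≤ -M ∨ M ≤ ℓ (x + a)) → fwdDiff a (u i) x < 0 →
    (∀ j, fwdDiff a (u i) x ≤ fwdDiff a (u j) x) →
    Δ (fwdDiff a (u i)) x ≤ δ * fwdDiff a (u i) x
  exists_cooperative : ∃ C, 0 ≤ C ∧ ∀ a, IsNondecreasingStep u a →
    ∀ i x, Δ (fwdDiff a (u i)) x ≤ C * fwdDiff a (u i) x

namespace IsCooperativeFront

variable {u : ι → E → ℝ} {ℓ : E →L[ℝ] ℝ} {M : ℝ}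

lemma exists_isNonnegSupersolution (hu : IsCooperativeFront u ℓ M) :
    ∃ C, 0 ≤ C ∧ ∀ a, IsNondecreasingStep u a →
      ∀ i, IsNonnegSupersolution C (fwdDiff a (u i)) := by
  obtain ⟨C, hC, hcoop⟩ := hu.exists_cooperative
  refine ⟨C, hC, fun a ha i ↦ ⟨?_, fun x ↦ sub_nonneg.2 (ha i x), hcoop a ha i⟩⟩
  exact ((hu.contDiff i).comp (contDiff_id.add contDiff_const)).sub (hu.contDiff i)

lemma isNondecreasingStep_of_slab [Finite ι] (hu : IsCooperativeFront u ℓ M) {a : E}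
    (hslab : ∀ i x, -M < ℓ x → ℓ (x + a) < M → u i x ≤ u i (x + a)) :
    IsNondecreasingStep u a := by
  obtain ⟨B, hB⟩ := hu.exists_abs_le
  obtain ⟨δ, hδ, hcoercive⟩ := hu.exists_coercive
  have hcontDiff (i : ι) : ContDiff ℝ 2 (fwdDiff a (u i)) :=
    ((hu.contDiff i).comp (contDiff_id.add contDiff_const)).sub (hu.contDiff i)
  have hbound (i : ι) (x : E) : -(2 * B) ≤ fwdDiff a (u i) x := by
    rw [fwdDiff]
    linarith [abs_le.1 (hB i x), abs_le.1 (hB i (x + a))]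
  intro i x
  refine sub_nonneg.1 (nonneg_of_laplacian_le_at_min hcontDiff hbound hδ ?_ i x)
  intro i x hneg hmin
  refine hcoercive i a x ?_ hneg hmin
  by_contra! hin
  exact (sub_nonneg.2 (hslab i x hin.1 hin.2)).not_gt hneg

lemma eventually_isNondecreasingStep [Finite ι] (hu : IsCooperativeFront u ℓ M) {a : E}
    (ha : 0 < ℓ a) (hstep : IsNondecreasingStep u a) : ∀ᶠ b in 𝓝 a, IsNondecreasingStep u b := by
  obtain ⟨C, hC, hsuper⟩ := hu.exists_isNonnegSupersolution
  obtain ⟨η, hη, hgap⟩ := hu.exists_gap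
  have hslab (i : ι) : ∀ᶠ b in 𝓝 a, ∀ x, |ℓ x| ≤ M → u i x ≤ u i (x + b) := by
    obtain ⟨c, hc, hle⟩ := exists_pos_le_fwdDiff_of_slab (hu.uniformContinuous i) ha hη (hgap i) hC
      (hsuper a hstep i)
    obtain ⟨r, hr, hclose⟩ := Metric.uniformContinuous_iff.1 (hu.uniformContinuous i) c hc
    filter_upwards [ball_mem_nhds a hr] with b hb x hx
    have hxb : |u i (x + b) - u i (x + a)| < c := hclose (by simpa using hb)
    have hxa : c ≤ u i (x + a) - u i x := hle x hx
    linarith [abs_lt.1 hxb]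
  filter_upwards [eventually_all.2 hslab, ℓ.continuous.continuousAt.eventually_const_lt ha]
    with b hb hℓb
  refine hu.isNondecreasingStep_of_slab fun i x hx hxb ↦ hb i x (abs_le.2 ⟨hx.le, ?_⟩)
  rw [map_add] at hxb
  linarith

lemma isNondecreasingStep_of_two_mul_le [Finite ι] (hu : IsCooperativeFront u ℓ M) {a : E}
    (ha : 2 * M ≤ ℓ a) : IsNondecreasingStep u a :=
  hu.isNondecreasingStep_of_slab fun i x hx hxa ↦ by
    rw [map_add] at hxa
    linarith

lemma isNondecreasingStep [Finite ι] (hu : IsCooperativeFront u ℓ M) {a : E} (ha : 0 < ℓ a) :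
    IsNondecreasingStep u a := by
  let good := {a | IsNondecreasingStep u a}
  have hgood : IsClosed good :=
    isClosed_setOf_isNondecreasingStep fun i ↦ (hu.contDiff i).continuous
  have hopen {b : E} (hb : 0 < ℓ b) (hbgood : b ∈ good) : b ∈ interior good :=
    mem_interior_iff_mem_nhds.2 (hu.eventually_isNondecreasingStep hb hbgood)
  have hpreconnected : IsPreconnected {b | 0 < ℓ b} :=
    ((convex_Ioi 0).linear_preimage ℓ.toLinearMap).isPreconnected
  have hnonempty : ({b | 0 < ℓ b} ∩ interior good).Nonempty := by
    obtain ⟨n, hn⟩ := exists_nat_ge (2 * M / ℓ a)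
    rw [div_le_iff₀ ha] at hn
    have hlarge : 2 * M ≤ ℓ ((n + 1) • a) := by
      simp only [map_nsmul, nsmul_eq_mul, Nat.cast_add, Nat.cast_one]
      linarith
    have hpos : 0 < ℓ ((n + 1) • a) := by
      rw [map_nsmul]
      positivity
    exact ⟨_, hpos, hopen hpos (hu.isNondecreasingStep_of_two_mul_le hlarge)⟩
  exact interior_subset <| hpreconnected.subset_of_closure_inter_subset isOpen_interior hnonempty
    (fun b hb ↦ hopen hb.2 (hgood.closure_interior_subset hb.1)) ha

lemma exists_fderiv_pos (hu : IsCooperativeFront u ℓ M) {e : E} (he : 0 < ℓ e) (i : ι) :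
    ∃ x, 0 < fderiv ℝ (u i) x e := by
  obtain ⟨η, hη, hgap⟩ := hu.exists_gap
  let s := |M| / ℓ e
  have hs : ℓ (s • e) = |M| := by simp [s, he.ne']
  obtain ⟨x, -, hmvt⟩ := domain_mvt (s := univ) (x := -(s • e)) (y := s • e)
    (fun z _ ↦ ((hu.contDiff i).differentiable two_ne_zero z).hasFDerivAt.hasFDerivWithinAt)
    convex_univ trivial trivial
  have hjump : u i (-(s • e)) + η ≤ u i (s • e) :=
    hgap i _ _ (by rw [map_neg, hs]; linarith [le_abs_self M]) (by rw [hs]; exact le_abs_self M)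
  have hincr : 0 < 2 * s * fderiv ℝ (u i) x e := by
    rw [sub_neg_eq_add, ← two_smul ℝ, smul_smul, map_smul, smul_eq_mul] at hmvt
    linarith
  exact ⟨x, pos_of_mul_pos_right hincr (by positivity)⟩

theorem fderiv_pos [Finite ι] (hu : IsCooperativeFront u ℓ M) {e : E} (he : 0 < ℓ e) (i : ι)
    (x : E) : 0 < fderiv ℝ (u i) x e := by
  obtain ⟨C, hC, hsuper⟩ := hu.exists_isNonnegSupersolution
  obtain ⟨y, hy⟩ := hu.exists_fderiv_pos he i
  refine fderiv_pos_of_exists_fderiv_pos (hu.contDiff i) hC (fun τ hτ ↦ hsuper _ ?_ i) hy x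
  exact hu.isNondecreasingStep (by simpa using mul_pos hτ he)

end IsCooperativeFront

end SlidingMethod

section Reaction

/-- The nonlinearity of `(P_Λ)`: the system reads `-Δu = reaction Λ u v` and
`-Δv = reaction Λ v u`. -/
def reaction (Λ p q : ℝ) : ℝ :=
  p - p ^ 3 - Λ * p * q ^ 2

variable {Λ p q p' q' : ℝ}

lemma abs_reaction_le (hΛ : 0 ≤ Λ) (hp : p ∈ Icc 0 1) (hq : q ∈ Icc 0 1) :
    |reaction Λ p q| ≤ 1 + Λ := by
  have hcube : p ^ 3 ∈ Icc 0 1 := ⟨pow_nonneg hp.1 3, pow_le_one₀ hp.1 hp.2⟩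
  have hprod : p * q ^ 2 ∈ Icc 0 1 :=
    ⟨mul_nonneg hp.1 (sq_nonneg q), mul_le_one₀ hp.2 (sq_nonneg q) (pow_le_one₀ hq.1 hq.2)⟩
  have hcoupling : Λ * (p * q ^ 2) ≤ Λ := mul_le_of_le_one_right hΛ hprod.2
  rw [reaction, mul_assoc, abs_le]
  constructor <;> linarith [hp.1, hp.2, hcube.1, hcube.2, mul_nonneg hΛ hprod.1]

lemma reaction_sub_reaction :
    reaction Λ p' q' - reaction Λ p q =
      (p' - p) * (1 - (p' ^ 2 + p' * p + p ^ 2) - Λ * q ^ 2) +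
        Λ * (p' * (q + q') * (q - q')) := by
  simp only [reaction]
  ring

lemma neg_mul_le_reaction_sub_reaction (hΛ : 0 ≤ Λ) (hp : p ∈ Icc 0 1) (hp' : p' ∈ Icc 0 1)
    (hq : q ∈ Icc 0 1) (hq' : q' ∈ Icc 0 1) (hpp' : p ≤ p') (hqq' : q' ≤ q) :
    -((2 + Λ) * (p' - p)) ≤ reaction Λ p' q' - reaction Λ p q := by
  have hslope : -(2 + Λ) ≤ 1 - (p' ^ 2 + p' * p + p ^ 2) - Λ * q ^ 2 := by
    have hcoupling : Λ * q ^ 2 ≤ Λ := mul_le_of_le_one_right hΛ (pow_le_one₀ hq.1 hq.2)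
    linarith [pow_le_one₀ (n := 2) hp.1 hp.2, pow_le_one₀ (n := 2) hp'.1 hp'.2,
      mul_le_one₀ hp'.2 hp.1 hp.2]
  have hcross : 0 ≤ Λ * (p' * (q + q') * (q - q')) :=
    mul_nonneg hΛ <| mul_nonneg (mul_nonneg hp'.1 (add_nonneg hq.1 hq'.1)) (sub_nonneg.2 hqq')
  rw [reaction_sub_reaction]
  linarith [mul_le_mul_of_nonneg_left hslope (sub_nonneg.2 hpp')]

lemma neg_mul_le_mul_add_mul {δ ε D D' K s : ℝ} (hΛ : 0 ≤ Λ) (hε : 0 ≤ ε) (hD : D ≤ 0)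
    (hDD' : D ≤ D') (hs : s ≤ -δ - Λ * (2 * ε)) (hK : 0 ≤ K) (hKε : D' ≤ 0 → K ≤ 2 * ε) :
    -(δ * D) ≤ D * s + Λ * (K * D') := by
  have hdiag : D * (-δ - Λ * (2 * ε)) ≤ D * s := mul_le_mul_of_nonpos_left hs hD
  have hcross : 2 * ε * D ≤ K * D' := by
    rcases le_total D' 0 with hD' | hD'
    · exact (mul_le_mul_of_nonpos_right (hKε hD') hD).trans (mul_le_mul_of_nonneg_left hDD' hK)
    · exact (mul_nonpos_of_nonneg_of_nonpos (by positivity) hD).trans (mul_nonneg hK hD')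
  linarith [mul_le_mul_of_nonneg_left hcross hΛ]

lemma exists_slope_bounds (hΛ : 1 < Λ) :
    ∃ ε ∈ Ioo (0 : ℝ) (1 / 2), ∃ δ > 0, 1 - Λ * (1 - ε) ^ 2 ≤ -δ - Λ * (2 * ε) ∧
      1 - 3 * (1 - ε) ^ 2 ≤ -δ - Λ * (2 * ε) := by
  let δ := min ((Λ - 1) / 2) 1
  have hδ : 0 < δ := lt_min (by linarith) one_pos
  have hstrong : ∀ᶠ ε in 𝓝 (0 : ℝ), 1 - Λ * (1 - ε) ^ 2 < -δ - Λ * (2 * ε) :=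
    ContinuousAt.eventually_lt (by fun_prop) (by fun_prop) (by
      have : δ ≤ (Λ - 1) / 2 := min_le_left _ _
      linarith)
  have hself : ∀ᶠ ε in 𝓝 (0 : ℝ), 1 - 3 * (1 - ε) ^ 2 < -δ - Λ * (2 * ε) :=
    ContinuousAt.eventually_lt (by fun_prop) (by fun_prop) (by
      have : δ ≤ 1 := min_le_right _ _
      linarith)
  have hIoo : ∀ᶠ ε in 𝓝[>] (0 : ℝ), ε ∈ Ioo (0 : ℝ) (1 / 2) :=
    Ioo_mem_nhdsGT one_half_pos
  obtain ⟨ε, hε, hstrong, hself⟩ :=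
    (hIoo.and ((hstrong.and hself).filter_mono nhdsWithin_le_nhds)).exists
  exact ⟨ε, hε, δ, hδ, hstrong.le, hself.le⟩

/-- At a component realizing the smallest, negative increment, the cross term is harmless next to
either of the stable states `(0, 1)` and `(1, 0)`, where the diagonal slope is close to `1 - Λ` and
to `-2`. -/
lemma exists_coercive_reaction (hΛ : 1 < Λ) :
    ∃ ε ∈ Ioo (0 : ℝ) (1 / 2), ∃ δ > 0, ∀ p ∈ Icc (0 : ℝ) 1, ∀ q ∈ Icc (0 : ℝ) 1,
      ∀ p' ∈ Icc (0 : ℝ) 1, ∀ q' ∈ Icc (0 : ℝ) 1, p < ε ∧ 1 - ε < q ∨ 1 - ε < p' ∧ q' < ε →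
        p' - p < 0 → p' - p ≤ q - q' →
          -(δ * (p' - p)) ≤ reaction Λ p' q' - reaction Λ p q := by
  obtain ⟨ε, ⟨hε, hε2⟩, δ, hδ, hstrong, hself⟩ := exists_slope_bounds hΛ
  have hΛ₀ : 0 ≤ Λ := by linarith
  refine ⟨ε, ⟨hε, hε2⟩, δ, hδ, fun p hp q hq p' hp' q' hq' hfar hneg hmin ↦ ?_⟩
  have hqq' : 0 ≤ q + q' := add_nonneg hq.1 hq'.1
  rcases hfar with ⟨hpε, hqε⟩ | ⟨hpε, hqε⟩
  · rw [reaction_sub_reaction]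
    refine neg_mul_le_mul_add_mul hΛ₀ hε.le hneg.le hmin ?_ (mul_nonneg hp'.1 hqq') fun _ ↦ ?_
    · have hq2 : (1 - ε) ^ 2 ≤ q ^ 2 := by gcongr; linarith
      linarith [mul_le_mul_of_nonneg_left hq2 hΛ₀, sq_nonneg p', sq_nonneg p,
        mul_nonneg hp'.1 hp.1]
    · calc
        p' * (q + q') ≤ ε * 2 := by gcongr <;> linarith [hq.2, hq'.2]
        _ = 2 * ε := mul_comm _ _
  · rw [← neg_sub (reaction Λ p q), reaction_sub_reaction]
    have hslope : 1 - (p ^ 2 + p * p' + p' ^ 2) - Λ * q' ^ 2 ≤ -δ - Λ * (2 * ε) := by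
      have hp2 : (1 - ε) ^ 2 ≤ p ^ 2 := by gcongr <;> linarith
      have hpp' : (1 - ε) * (1 - ε) ≤ p * p' := by gcongr <;> linarith
      have hp'2 : (1 - ε) ^ 2 ≤ p' ^ 2 := by gcongr; linarith
      linarith [mul_nonneg hΛ₀ (sq_nonneg q')]
    have := neg_mul_le_mul_add_mul hΛ₀ hε.le hneg.le hmin hslope (mul_nonneg hp.1 hqq')
      fun hq0 ↦ by
        calc
          p * (q + q') ≤ 1 * (ε + ε) := by gcongr <;> linarith [hp.2]
          _ = 2 * ε := by ring
    linarith

end Reaction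

section Solution

namespace IsSolution

variable {N : ℕ} {Λ : ℝ} {u v : EuclideanSpace ℝ (Fin N) → ℝ}

lemma symm (h : IsSolution N Λ u v) : IsSolution N Λ v u := by
  obtain ⟨hu, hv, hequ, heqv⟩ := h
  exact ⟨hv, hu, fun x ↦ by rw [heqv x]; ring, fun x ↦ by rw [hequ x]; ring⟩

lemma laplacian_eq (h : IsSolution N Λ u v) (x : EuclideanSpace ℝ (Fin N)) :
    Δ u x = -reaction Λ (u x) (v x) := by
  rw [← lap_eq_laplacian h.1, reaction, ← h.2.2.1 x, neg_neg]

lemma laplacian_fwdDiff_eq (h : IsSolution N Λ u v) (a x : EuclideanSpace ℝ (Fin N)) :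
    Δ (fwdDiff a u) x = reaction Λ (u x) (v x) - reaction Λ (u (x + a)) (v (x + a)) := by
  rw [laplacian_fwdDiff h.1, h.laplacian_eq, h.laplacian_eq]
  ring

lemma mem_Icc (h : IsSolution N Λ u v) (hΛ : 0 ≤ Λ) (hu : ∀ x, 0 ≤ u x)
    (x : EuclideanSpace ℝ (Fin N)) : u x ∈ Icc 0 1 := by
  have hcube (y : EuclideanSpace ℝ (Fin N)) (hy : 0 < u y - 1) :
      (u y - 1) ^ 3 ≤ Δ (fun z ↦ u z - 1) y := by
    have hlap : Δ (fun z ↦ u z - 1) y = Δ u y := by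
      have := h.1.contDiffAt.laplacian_sub (contDiffAt_const (c := (1 : ℝ)) (x := y))
      simpa [Pi.sub_def] using this
    have hcoupling : 0 ≤ Λ * u y * v y ^ 2 := by have := hu y; positivity
    have hself : (u y - 1) ^ 3 ≤ u y ^ 3 - u y := by nlinarith
    rw [hlap, h.laplacian_eq, reaction]
    linarith
  exact ⟨hu x, sub_nonpos.1 (nonpos_of_cube_le_laplacian (h.1.sub contDiff_const) hcube x)⟩

lemma uniformContinuous (h : IsSolution N Λ u v) (hΛ : 0 ≤ Λ) (hu : ∀ x, 0 ≤ u x)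
    (hv : ∀ x, 0 ≤ v x) : UniformContinuous u := by
  have hmem := h.mem_Icc hΛ hu
  obtain ⟨L, hL⟩ := exists_lipschitzWith_of_laplacian_bounded h.1
    (fun x ↦ (abs_of_nonneg (hu x)).trans_le (hmem x).2)
    (fun x ↦ by
      rw [h.laplacian_eq, abs_neg]
      exact abs_reaction_le hΛ (hmem x) (h.symm.mem_Icc hΛ hv x))
  exact hL.uniformContinuous

lemma laplacian_fwdDiff_le_of_le (h : IsSolution N Λ u v) (hΛ : 0 ≤ Λ) (hu : ∀ x, 0 ≤ u x)
    (hv : ∀ x, 0 ≤ v x) {a x : EuclideanSpace ℝ (Fin N)} (hua : u x ≤ u (x + a))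
    (hva : v (x + a) ≤ v x) : Δ (fwdDiff a u) x ≤ (2 + Λ) * fwdDiff a u x := by
  have hmemu := h.mem_Icc hΛ hu
  have hmemv := h.symm.mem_Icc hΛ hv
  have := neg_mul_le_reaction_sub_reaction hΛ (hmemu x) (hmemu (x + a)) (hmemv x) (hmemv (x + a))
    hua hva
  rw [h.laplacian_fwdDiff_eq, fwdDiff]
  linarith

end IsSolution

lemma exists_laplacian_fwdDiff_le {Λ : ℝ} (hΛ : 1 < Λ) :
    ∃ ε ∈ Ioo (0 : ℝ) (1 / 2), ∃ δ > 0, ∀ {N : ℕ} {u v : EuclideanSpace ℝ (Fin N) → ℝ},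
      IsSolution N Λ u v → (∀ x, 0 ≤ u x) → (∀ x, 0 ≤ v x) → ∀ {a x},
        u x < ε ∧ 1 - ε < v x ∨ 1 - ε < u (x + a) ∧ v (x + a) < ε →
          fwdDiff a u x < 0 → fwdDiff a u x ≤ fwdDiff a (-v) x →
            Δ (fwdDiff a u) x ≤ δ * fwdDiff a u x := by
  have hΛ₀ : 0 ≤ Λ := by linarith
  obtain ⟨ε, hε, δ, hδ, hcoercive⟩ := exists_coercive_reaction hΛ
  refine ⟨ε, hε, δ, hδ, fun {N u v} h hu hv {a x} hfar hneg hmin ↦ ?_⟩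
  have hmemu := h.mem_Icc hΛ₀ hu
  have hmemv := h.symm.mem_Icc hΛ₀ hv
  simp only [fwdDiff, Pi.neg_apply, neg_sub_neg] at hmin
  have := hcoercive _ (hmemu x) _ (hmemv x) _ (hmemu (x + a)) _ (hmemv (x + a)) hfar hneg hmin
  rw [h.laplacian_fwdDiff_eq, fwdDiff]
  linarith

variable {N : ℕ} {Λ : ℝ} {u v : EuclideanSpace ℝ (Fin (N + 1)) → ℝ}

lemma Hinf.exists_threshold (hinf : Hinf N u v) {ε : ℝ} (hε : 0 < ε) :
    ∃ M, (∀ x, x (Fin.last N) ≤ -M → u x < ε ∧ 1 - ε < v x) ∧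
      ∀ x, M ≤ x (Fin.last N) → 1 - ε < u x ∧ v x < ε := by
  obtain ⟨Mtop, htop⟩ := hinf.1 ε hε
  obtain ⟨Mbot, hbot⟩ := hinf.2 ε hε
  refine ⟨max Mtop (-Mbot), fun x hx ↦ ?_, fun x hx ↦ ?_⟩
  · obtain ⟨hux, hvx⟩ := hbot x (by linarith [le_max_right Mtop (-Mbot)])
    exact ⟨(abs_lt.1 hux).2, by linarith [abs_lt.1 hvx]⟩
  · obtain ⟨hux, hvx⟩ := htop x ((le_max_left _ _).trans hx)
    exact ⟨by linarith [abs_lt.1 hux], (abs_lt.1 hvx).2⟩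

lemma IsSolution.exists_isCooperativeFront (h : IsSolution (N + 1) Λ u v) (hΛ : 1 < Λ)
    (hu : ∀ x, 0 ≤ u x) (hv : ∀ x, 0 ≤ v x) (hinf : Hinf N u v) :
    ∃ M, IsCooperativeFront ![u, -v] (EuclideanSpace.proj (Fin.last N)) M := by
  have hΛ₀ : 0 ≤ Λ := by linarith
  obtain ⟨ε, ⟨hε, hε2⟩, δ, hδ, hcoercive⟩ := exists_laplacian_fwdDiff_le hΛ
  obtain ⟨M, hbot, htop⟩ := hinf.exists_threshold hε
  refine ⟨M, ?_, ?_, ⟨1, ?_⟩, ⟨1 - 2 * ε, by linarith, ?_⟩, ⟨δ, hδ, ?_⟩, 2 + Λ, by positivity, ?_⟩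
  · simpa [Fin.forall_fin_two] using ⟨h.1, h.2.1.neg⟩
  · simpa [Fin.forall_fin_two] using
      ⟨h.uniformContinuous hΛ₀ hu hv, (h.symm.uniformContinuous hΛ₀ hv hu).neg⟩
  · refine Fin.forall_fin_two.2 ⟨fun x ↦ ?_, fun x ↦ ?_⟩
    · exact (abs_of_nonneg (hu x)).trans_le (h.mem_Icc hΛ₀ hu x).2
    · simpa [abs_of_nonneg (hv x)] using (h.symm.mem_Icc hΛ₀ hv x).2
  · refine Fin.forall_fin_two.2 ⟨fun x y hx hy ↦ ?_, fun x y hx hy ↦ ?_⟩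
    · change u x + (1 - 2 * ε) ≤ u y
      linarith [hbot x hx, htop y hy]
    · change -v x + (1 - 2 * ε) ≤ -v y
      linarith [hbot x hx, htop y hy]
  · refine Fin.forall_fin_two.2 ⟨fun a x hfar hneg hmin ↦ ?_, fun a x hfar hneg hmin ↦ ?_⟩
    · exact hcoercive h hu hv (hfar.imp (hbot x) (htop (x + a))) hneg (hmin 1)
    · change Δ (fwdDiff a (-v)) x ≤ δ * fwdDiff a (-v) x
      rw [laplacian_fwdDiff_neg, fwdDiff_neg]
      refine hcoercive h.symm hv hu ?_ ?_ ?_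
      · rw [add_neg_cancel_right]
        exact hfar.symm.imp (fun hx ↦ (htop _ hx).symm) (fun hx ↦ (hbot _ hx).symm)
      · rwa [← fwdDiff_neg]
      · rw [← fwdDiff_neg]
        exact (hmin 0).trans_eq (by simp [fwdDiff, neg_add_eq_sub])
  · intro a ha
    have hau : ∀ x, u x ≤ u (x + a) := ha 0
    have hav : ∀ x, v (x + a) ≤ v x := fun x ↦ neg_le_neg_iff.1 (ha 1 x)
    refine Fin.forall_fin_two.2 ⟨fun x ↦ ?_, fun x ↦ ?_⟩
    · exact h.laplacian_fwdDiff_le_of_le hΛ₀ hu hv (hau x) (hav x)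
    · change Δ (fwdDiff a (-v)) x ≤ (2 + Λ) * fwdDiff a (-v) x
      rw [laplacian_fwdDiff_neg, fwdDiff_neg]
      refine h.symm.laplacian_fwdDiff_le_of_le hΛ₀ hv hu ?_ ?_ <;> rw [add_neg_cancel_right]
      exacts [hav x, hau x]

theorem stmt_13_general (hΛ : 1 < Λ) (hsol : IsSolution (N + 1) Λ u v) (hu : ∀ x, 0 ≤ u x)
    (hv : ∀ x, 0 ≤ v x) (hinf : Hinf N u v) {e : EuclideanSpace ℝ (Fin (N + 1))}
    (he : 0 < e (Fin.last N)) (x : EuclideanSpace ℝ (Fin (N + 1))) :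
    0 < fderiv ℝ u x e ∧ fderiv ℝ v x e < 0 := by
  obtain ⟨M, hfront⟩ := hsol.exists_isCooperativeFront hΛ hu hv hinf
  have hpos := hfront.fderiv_pos (e := e) he
  exact ⟨hpos 0 x, by simpa [fderiv_neg] using hpos 1 x⟩

end Solution

/-- Proposition 3.1: monotonicity in `x_N` under `(h∞)`. -/
theorem stmt_13 (N : ℕ) (Λ : ℝ) (hΛ : 1 < Λ)
    (u v : EuclideanSpace ℝ (Fin (N + 1)) → ℝ)
    (hsol : IsSolution (N + 1) Λ u v)
    (hu : ∀ x, 0 ≤ u x) (hv : ∀ x, 0 ≤ v x)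
    (hinf : Hinf N u v) :
    ∀ x : EuclideanSpace ℝ (Fin (N + 1)),
      0 < fderiv ℝ u x (EuclideanSpace.single (Fin.last N) 1) ∧
      fderiv ℝ v x (EuclideanSpace.single (Fin.last N) 1) < 0 :=
  stmt_13_general hΛ hsol hu hv hinf (by simp)
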